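/- Let n, m ≥ 1, g : Fin n × Fin m → ℝ with g ≥ 0, λ > 0, and w₀ : Fin n × Fin m → ℝ. Let v̄ be the (unique) point of the nonempty compact convex set λK = { (λ/2)(div(g·ξ) + div'(g·η)) : ξ, η ∈ A } nearest to w₀ in the Euclidean norm. Then w̄ = w₀ − v̄ is the unique minimizer over all w of the energy TV_{1,π/4,g}(w) + (1/(2λ))‖w − w₀‖². -/

import Mathlib

/-- Discrete gradient in the x-direction with Neumann boundary conditions. -/
def gradX {n m : ℕ} (u : Fin n × Fin m → ℝ) (q : Fin n × Fin m) : ℝ :=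
  if h : (q.1 : ℕ) + 1 < n then u (⟨(q.1 : ℕ) + 1, h⟩, q.2) - u q else 0

/-- Discrete gradient in the y-direction with Neumann boundary conditions. -/
def gradY {n m : ℕ} (u : Fin n × Fin m → ℝ) (q : Fin n × Fin m) : ℝ :=
  if h : (q.2 : ℕ) + 1 < m then u (q.1, ⟨(q.2 : ℕ) + 1, h⟩) - u q else 0

/-- Discrete diagonal gradient (direction (1,1)) with Neumann boundary conditions. -/
noncomputable def gradXY {n m : ℕ} (u : Fin n × Fin m → ℝ) (q : Fin n × Fin m) : ℝ :=
  if h : (q.1 : ℕ) + 1 < n ∧ (q.2 : ℕ) + 1 < m then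
    (Real.sqrt 2)⁻¹ * (u (⟨(q.1 : ℕ) + 1, h.1⟩, ⟨(q.2 : ℕ) + 1, h.2⟩) - u q)
  else 0

/-- Discrete diagonal gradient (direction (-1,1)) with Neumann boundary conditions. -/
noncomputable def gradYX {n m : ℕ} (u : Fin n × Fin m → ℝ) (q : Fin n × Fin m) : ℝ :=
  if h : 0 < (q.1 : ℕ) ∧ (q.2 : ℕ) + 1 < m then
    (Real.sqrt 2)⁻¹ *
      (u (⟨(q.1 : ℕ) - 1, lt_of_le_of_lt (Nat.sub_le _ _) q.1.isLt⟩,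
          ⟨(q.2 : ℕ) + 1, h.2⟩) - u q)
  else 0

/-- The g-weighted Manhattan total variation with diagonal terms. -/
noncomputable def wTV {n m : ℕ} (g : Fin n × Fin m → ℝ) (u : Fin n × Fin m → ℝ) : ℝ :=
  (1 / 2) * ∑ q : Fin n × Fin m,
    g q * (|gradX u q| + |gradY u q| + |gradXY u q| + |gradYX u q|)

/-- The discrete divergence: the negative adjoint of the gradient `(∇ˣ, ∇ʸ)`. -/
def divv {n m : ℕ} (px py : Fin n × Fin m → ℝ) (q : Fin n × Fin m) : ℝ :=
  (if (q.1 : ℕ) + 1 < n then px q else 0) -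
    (if 0 < (q.1 : ℕ) then
      px (⟨(q.1 : ℕ) - 1, lt_of_le_of_lt (Nat.sub_le _ _) q.1.isLt⟩, q.2) else 0) +
  (if (q.2 : ℕ) + 1 < m then py q else 0) -
    (if 0 < (q.2 : ℕ) then
      py (q.1, ⟨(q.2 : ℕ) - 1, lt_of_le_of_lt (Nat.sub_le _ _) q.2.isLt⟩) else 0)

/-- The diagonal discrete divergence: the negative adjoint of the diagonal
gradient pair `(∇^{xy}, ∇^{yx})`. -/
noncomputable def divv' {n m : ℕ} (f1 f2 : Fin n × Fin m → ℝ) (q : Fin n × Fin m) : ℝ :=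
  (Real.sqrt 2)⁻¹ *
    ((if (q.1 : ℕ) + 1 < n ∧ (q.2 : ℕ) + 1 < m then f1 q else 0) -
      (if 0 < (q.1 : ℕ) ∧ 0 < (q.2 : ℕ) then
        f1 (⟨(q.1 : ℕ) - 1, lt_of_le_of_lt (Nat.sub_le _ _) q.1.isLt⟩,
            ⟨(q.2 : ℕ) - 1, lt_of_le_of_lt (Nat.sub_le _ _) q.2.isLt⟩) else 0) +
      (if 0 < (q.1 : ℕ) ∧ (q.2 : ℕ) + 1 < m then f2 q else 0) -
      (if h : (q.1 : ℕ) + 1 < n ∧ 0 < (q.2 : ℕ) then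
        f2 (⟨(q.1 : ℕ) + 1, h.1⟩,
            ⟨(q.2 : ℕ) - 1, lt_of_le_of_lt (Nat.sub_le _ _) q.2.isLt⟩) else 0))

open Classical in
theorem sum_shift {α : Type*} [Fintype α] (P Q : α → Prop) (s : ∀ a, P a → α)
    (t : ∀ a, Q a → α) (hst : ∀ a b, (∃ h : P a, s a h = b) ↔ (∃ h : Q b, t b h = a))
    (F : α → α → ℝ) :
    (∑ a, if h : P a then F a (s a h) else 0) = ∑ b, if h : Q b then F (t b h) b else 0 := by
  have h1 : ∀ a, (if h : P a then F a (s a h) else 0)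
      = ∑ b, if (∃ h : P a, s a h = b) then F a b else 0 := by
    intro a
    by_cases h : P a
    · simp [h]
    · simp [h]
  have h2 : ∀ b, (if h : Q b then F (t b h) b else 0)
      = ∑ a, if (∃ h : Q b, t b h = a) then F a b else 0 := by
    intro b
    by_cases h : Q b
    · simp [h]
    · simp [h]
  simp only [h1, h2]
  rw [Finset.sum_comm]
  simp only [hst]

theorem divv_adj {n m : ℕ} (px py w : Fin n × Fin m → ℝ) :
    ∑ q, divv px py q * w q = - ∑ q, (px q * gradX w q + py q * gradY w q) := by
  have hx := sum_shift (α := Fin n × Fin m) (fun q => (q.1 : ℕ) + 1 < n) (fun q => 0 < (q.1 : ℕ))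
    (fun q h => (⟨(q.1 : ℕ) + 1, h⟩, q.2))
    (fun q _ => (⟨(q.1 : ℕ) - 1, lt_of_le_of_lt (Nat.sub_le _ _) q.1.isLt⟩, q.2))
    (by
      rintro ⟨⟨a, ha⟩, ⟨b, hb⟩⟩ ⟨⟨c, hc⟩, ⟨d, hd⟩⟩
      simp only [Prod.mk.injEq, Fin.mk.injEq, exists_prop]
      omega) (fun a b => px a * w b)
  have hy := sum_shift (α := Fin n × Fin m) (fun q => (q.2 : ℕ) + 1 < m) (fun q => 0 < (q.2 : ℕ))
    (fun q h => (q.1, ⟨(q.2 : ℕ) + 1, h⟩))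
    (fun q _ => (q.1, ⟨(q.2 : ℕ) - 1, lt_of_le_of_lt (Nat.sub_le _ _) q.2.isLt⟩))
    (by
      rintro ⟨⟨a, ha⟩, ⟨b, hb⟩⟩ ⟨⟨c, hc⟩, ⟨d, hd⟩⟩
      simp only [Prod.mk.injEq, Fin.mk.injEq, exists_prop]
      omega) (fun a b => py a * w b)
  rw [eq_neg_iff_add_eq_zero]
  have := congrArg₂ (· + ·) (sub_eq_zero.2 hx) (sub_eq_zero.2 hy)
  simp only [← Finset.sum_sub_distrib, ← Finset.sum_add_distrib, add_zero] at this ⊢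
  rw [← this]
  refine Finset.sum_congr rfl fun q _ => ?_
  simp only [divv, gradX, gradY]
  split_ifs <;> ring

theorem divv'_adj {n m : ℕ} (px py w : Fin n × Fin m → ℝ) :
    ∑ q, divv' px py q * w q = - ∑ q, (px q * gradXY w q + py q * gradYX w q) := by
  have hx := sum_shift (α := Fin n × Fin m) (fun q => (q.1 : ℕ) + 1 < n ∧ (q.2 : ℕ) + 1 < m)
    (fun q => 0 < (q.1 : ℕ) ∧ 0 < (q.2 : ℕ))
    (fun q h => (⟨(q.1 : ℕ) + 1, h.1⟩, ⟨(q.2 : ℕ) + 1, h.2⟩))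
    (fun q _ => (⟨(q.1 : ℕ) - 1, lt_of_le_of_lt (Nat.sub_le _ _) q.1.isLt⟩,
      ⟨(q.2 : ℕ) - 1, lt_of_le_of_lt (Nat.sub_le _ _) q.2.isLt⟩))
    (by
      rintro ⟨⟨a, ha⟩, ⟨b, hb⟩⟩ ⟨⟨c, hc⟩, ⟨d, hd⟩⟩
      simp only [Prod.mk.injEq, Fin.mk.injEq, exists_prop]
      omega) (fun a b => (Real.sqrt 2)⁻¹ * (px a * w b))
  have hy := sum_shift (α := Fin n × Fin m) (fun q => 0 < (q.1 : ℕ) ∧ (q.2 : ℕ) + 1 < m)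
    (fun q => (q.1 : ℕ) + 1 < n ∧ 0 < (q.2 : ℕ))
    (fun q h => (⟨(q.1 : ℕ) - 1, lt_of_le_of_lt (Nat.sub_le _ _) q.1.isLt⟩,
      ⟨(q.2 : ℕ) + 1, h.2⟩))
    (fun q h => (⟨(q.1 : ℕ) + 1, h.1⟩,
      ⟨(q.2 : ℕ) - 1, lt_of_le_of_lt (Nat.sub_le _ _) q.2.isLt⟩))
    (by
      rintro ⟨⟨a, ha⟩, ⟨b, hb⟩⟩ ⟨⟨c, hc⟩, ⟨d, hd⟩⟩
      simp only [Prod.mk.injEq, Fin.mk.injEq, exists_prop]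
      omega) (fun a b => (Real.sqrt 2)⁻¹ * (py a * w b))
  rw [eq_neg_iff_add_eq_zero]
  have := congrArg₂ (· + ·) (sub_eq_zero.2 hx) (sub_eq_zero.2 hy)
  simp only [← Finset.sum_sub_distrib, ← Finset.sum_add_distrib, add_zero] at this ⊢
  rw [← this]
  refine Finset.sum_congr rfl fun q _ => ?_
  simp only [divv', gradXY, gradYX]
  generalize (Real.sqrt 2)⁻¹ = c
  split_ifs <;> ring

theorem pair_eq {n m : ℕ} (g ξx ξy ηx ηy w : Fin n × Fin m → ℝ) (lam : ℝ) :
    ∑ q, ((lam / 2) * (divv (fun r => g r * ξx r) (fun r => g r * ξy r) q +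
        divv' (fun r => g r * ηx r) (fun r => g r * ηy r) q)) * w q
      = (lam / 2) * ∑ q, g q * (-(ξx q) * gradX w q + -(ξy q) * gradY w q
        + -(ηx q) * gradXY w q + -(ηy q) * gradYX w q) := by
  have h1 := divv_adj (fun r => g r * ξx r) (fun r => g r * ξy r) w
  have h2 := divv'_adj (fun r => g r * ηx r) (fun r => g r * ηy r) w
  have h3 : ∑ q, ((lam / 2) * (divv (fun r => g r * ξx r) (fun r => g r * ξy r) q +
        divv' (fun r => g r * ηx r) (fun r => g r * ηy r) q)) * w q
      = (lam / 2) * (∑ q, divv (fun r => g r * ξx r) (fun r => g r * ξy r) q * w q +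
        ∑ q, divv' (fun r => g r * ηx r) (fun r => g r * ηy r) q * w q) := by
    rw [← Finset.sum_add_distrib, Finset.mul_sum]
    exact Finset.sum_congr rfl fun q _ => by ring
  rw [h3, h1, h2, ← neg_add, ← Finset.sum_add_distrib, ← Finset.sum_neg_distrib]
  congr 1
  exact Finset.sum_congr rfl fun q _ => by ring

theorem neg_mul_le_abs_aux (x y : ℝ) (hx : |x| ≤ 1) : -x * y ≤ |y| := by
  calc -x * y ≤ |-x * y| := le_abs_self _
    _ = |x| * |y| := by rw [abs_mul, abs_neg]
    _ ≤ 1 * |y| := mul_le_mul_of_nonneg_right hx (abs_nonneg _)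
    _ = |y| := one_mul _

theorem exists_sign_aux {α : Type*} (f : α → ℝ) :
    ∃ s : α → ℝ, (∀ q, |s q| ≤ 1) ∧ ∀ q, -(s q) * f q = |f q| := by
  refine ⟨fun q => if 0 ≤ f q then -1 else 1, fun q => ?_, fun q => ?_⟩
  · dsimp only
    split_ifs <;> simp
  · dsimp only
    split_ifs with h
    · rw [abs_of_nonneg h]; ring
    · rw [abs_of_neg (not_le.1 h)]; ring

theorem conv_abs_aux (x y t : ℝ) (hx : |x| ≤ 1) (hy : |y| ≤ 1) (h0 : 0 ≤ t) (h1 : t ≤ 1) :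
    |(1 - t) * x + t * y| ≤ 1 := by
  rw [abs_le] at *
  constructor <;> nlinarith

theorem divv_conv {n m : ℕ} (a b c d : Fin n × Fin m → ℝ) (s t : ℝ) (q : Fin n × Fin m) :
    divv (fun r => s * a r + t * c r) (fun r => s * b r + t * d r) q
      = s * divv a b q + t * divv c d q := by
  simp only [divv]
  split_ifs <;> ring

theorem divv'_conv {n m : ℕ} (a b c d : Fin n × Fin m → ℝ) (s t : ℝ) (q : Fin n × Fin m) :
    divv' (fun r => s * a r + t * c r) (fun r => s * b r + t * d r) q
      = s * divv' a b q + t * divv' c d q := by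
  simp only [divv']
  generalize (Real.sqrt 2)⁻¹ = e
  split_ifs <;> ring

theorem variational_aux (A B : ℝ) (h : ∀ t : ℝ, 0 ≤ t → t ≤ 1 → 0 ≤ -2 * t * A + t ^ 2 * B)
    (hB : 0 ≤ B) : A ≤ 0 := by
  by_contra hA
  push Not at hA
  have hpos : 0 < A + B := by linarith
  have h1 := h (A / (A + B)) (by positivity) (by rw [div_le_one hpos]; linarith)
  have h2 : -2 * (A / (A + B)) * A + (A / (A + B)) ^ 2 * B
      = -(A ^ 2 * (2 * A + B)) / (A + B) ^ 2 := by
    field_simp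
    ring
  rw [h2] at h1
  have : 0 < A ^ 2 * (2 * A + B) / (A + B) ^ 2 := by positivity
  rw [neg_div] at h1
  linarith

/-- The solution of the weighted ROF problem is obtained by subtracting from `w₀` its
projection onto the convex set `λK`. -/
theorem ROF_solution_via_projection (n m : ℕ) (hn : 1 ≤ n) (hm : 1 ≤ m)
    (g : Fin n × Fin m → ℝ) (hg : ∀ q, 0 ≤ g q)
    (lam : ℝ) (hlam : 0 < lam)
    (w₀ : Fin n × Fin m → ℝ)
    (lamK : Set (Fin n × Fin m → ℝ))
    (hlamK : lamK = {v | ∃ ξx ξy ηx ηy : Fin n × Fin m → ℝ,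
      (∀ q, |ξx q| ≤ 1) ∧ (∀ q, |ξy q| ≤ 1) ∧
      (∀ q, |ηx q| ≤ 1) ∧ (∀ q, |ηy q| ≤ 1) ∧
      v = fun q => (lam / 2) * (divv (fun r => g r * ξx r) (fun r => g r * ξy r) q +
        divv' (fun r => g r * ηx r) (fun r => g r * ηy r) q)})
    (vbar : Fin n × Fin m → ℝ) (hvbar : vbar ∈ lamK)
    (hnearest : ∀ v ∈ lamK,
      ∑ q : Fin n × Fin m, (w₀ q - vbar q) ^ 2 ≤ ∑ q : Fin n × Fin m, (w₀ q - v q) ^ 2) :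
    (∀ w : Fin n × Fin m → ℝ,
      wTV g (w₀ - vbar) + (1 / (2 * lam)) * ∑ q : Fin n × Fin m, ((w₀ - vbar) q - w₀ q) ^ 2 ≤
        wTV g w + (1 / (2 * lam)) * ∑ q : Fin n × Fin m, (w q - w₀ q) ^ 2) ∧
    (∀ w : Fin n × Fin m → ℝ,
      (∀ w' : Fin n × Fin m → ℝ,
        wTV g w + (1 / (2 * lam)) * ∑ q : Fin n × Fin m, (w q - w₀ q) ^ 2 ≤
          wTV g w' + (1 / (2 * lam)) * ∑ q : Fin n × Fin m, (w' q - w₀ q) ^ 2) →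
      w = w₀ - vbar) := by
  have hmem : ∀ v ∈ lamK, ∀ w : Fin n × Fin m → ℝ, ∑ q, v q * w q ≤ lam * wTV g w := by
    intro v hv w
    rw [hlamK] at hv
    obtain ⟨ξx, ξy, ηx, ηy, h1, h2, h3, h4, rfl⟩ := hv
    rw [pair_eq, wTV, ← mul_assoc, mul_one_div]
    refine mul_le_mul_of_nonneg_left (Finset.sum_le_sum fun q _ => ?_) (by positivity)
    refine mul_le_mul_of_nonneg_left ?_ (hg q)
    have := neg_mul_le_abs_aux _ (gradX w q) (h1 q)
    have := neg_mul_le_abs_aux _ (gradY w q) (h2 q)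
    have := neg_mul_le_abs_aux _ (gradXY w q) (h3 q)
    have := neg_mul_le_abs_aux _ (gradYX w q) (h4 q)
    linarith
  have hex : ∀ w : Fin n × Fin m → ℝ, ∃ v ∈ lamK, ∑ q, v q * w q = lam * wTV g w := by
    intro w
    obtain ⟨ξx, h1, e1⟩ := exists_sign_aux (gradX w)
    obtain ⟨ξy, h2, e2⟩ := exists_sign_aux (gradY w)
    obtain ⟨ηx, h3, e3⟩ := exists_sign_aux (gradXY w)
    obtain ⟨ηy, h4, e4⟩ := exists_sign_aux (gradYX w)
    refine ⟨_, by rw [hlamK]; exact ⟨ξx, ξy, ηx, ηy, h1, h2, h3, h4, rfl⟩, ?_⟩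
    rw [pair_eq, wTV, ← mul_assoc, mul_one_div]
    simp only [e1, e2, e3, e4]
  have hconv : ∀ u ∈ lamK, ∀ v ∈ lamK, ∀ t : ℝ, 0 ≤ t → t ≤ 1 →
      (fun q => (1 - t) * u q + t * v q) ∈ lamK := by
    intro u hu v hv t h0 h1
    rw [hlamK] at hu hv ⊢
    obtain ⟨a, b, c, d, ha, hb, hc, hd, rfl⟩ := hu
    obtain ⟨a', b', c', d', ha', hb', hc', hd', rfl⟩ := hv
    refine ⟨fun q => (1 - t) * a q + t * a' q, fun q => (1 - t) * b q + t * b' q,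
      fun q => (1 - t) * c q + t * c' q, fun q => (1 - t) * d q + t * d' q,
      fun q => conv_abs_aux _ _ _ (ha q) (ha' q) h0 h1,
      fun q => conv_abs_aux _ _ _ (hb q) (hb' q) h0 h1,
      fun q => conv_abs_aux _ _ _ (hc q) (hc' q) h0 h1,
      fun q => conv_abs_aux _ _ _ (hd q) (hd' q) h0 h1, ?_⟩
    funext q
    have e : ∀ x y : Fin n × Fin m → ℝ, (fun r => g r * ((1 - t) * x r + t * y r))
        = fun r => (1 - t) * (g r * x r) + t * (g r * y r) := by
      intro x y; funext r; ring
    simp only [e]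
    rw [divv_conv (fun r => g r * a r) (fun r => g r * b r) (fun r => g r * a' r)
        (fun r => g r * b' r),
      divv'_conv (fun r => g r * c r) (fun r => g r * d r) (fun r => g r * c' r)
        (fun r => g r * d' r)]
    ring
  have hvar : ∀ v ∈ lamK, ∑ q, (w₀ q - vbar q) * (v q - vbar q) ≤ 0 := by
    intro v hv
    refine variational_aux _ (∑ q, (v q - vbar q) ^ 2) (fun t h0 h1 => ?_)
      (Finset.sum_nonneg fun q _ => sq_nonneg _)
    have h := hnearest _ (hconv vbar hvbar v hv t h0 h1)
    rw [← sub_nonneg, ← Finset.sum_sub_distrib] at h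
    rw [Finset.mul_sum, Finset.mul_sum, ← Finset.sum_add_distrib]
    refine h.trans_eq (Finset.sum_congr rfl fun q _ => ?_)
    ring
  have hTV : lam * wTV g (w₀ - vbar) ≤ ∑ q, vbar q * (w₀ q - vbar q) := by
    obtain ⟨v, hv, e⟩ := hex (w₀ - vbar)
    have h := hvar v hv
    rw [← e, ← sub_nonpos, ← Finset.sum_sub_distrib]
    refine le_trans (le_of_eq (Finset.sum_congr rfl fun q _ => ?_)) h
    simp only [Pi.sub_apply]
    ring
  have key : ∀ w : Fin n × Fin m → ℝ,
      (wTV g (w₀ - vbar) + (1 / (2 * lam)) * ∑ q, ((w₀ - vbar) q - w₀ q) ^ 2)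
        + (1 / (2 * lam)) * ∑ q, (w q - (w₀ - vbar) q) ^ 2 ≤
      wTV g w + (1 / (2 * lam)) * ∑ q, (w q - w₀ q) ^ 2 := by
    intro w
    have h1 := hmem vbar hvbar w
    have e : 2 * ∑ q, vbar q * (w₀ q - vbar q) + ∑ q, ((w₀ - vbar) q - w₀ q) ^ 2
        + ∑ q, (w q - (w₀ - vbar) q) ^ 2
        = 2 * ∑ q, vbar q * w q + ∑ q, (w q - w₀ q) ^ 2 := by
      rw [Finset.mul_sum, Finset.mul_sum, ← Finset.sum_add_distrib, ← Finset.sum_add_distrib,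
        ← Finset.sum_add_distrib]
      refine Finset.sum_congr rfl fun q _ => ?_
      simp only [Pi.sub_apply]
      ring
    have h2 : (0 : ℝ) < 2 * lam := by positivity
    refine le_of_mul_le_mul_left ?_ h2
    have h3 : ∀ x : ℝ, 2 * lam * (1 / (2 * lam) * x) = x := by
      intro x; field_simp
    rw [mul_add, mul_add, mul_add, h3, h3, h3]
    linarith
  have hpos : 0 < 1 / (2 * lam) := by positivity
  refine ⟨fun w => ?_, fun w hw => ?_⟩
  · have h := key w
    have : 0 ≤ (1 / (2 * lam)) * ∑ q, (w q - (w₀ - vbar) q) ^ 2 :=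
      mul_nonneg hpos.le (Finset.sum_nonneg fun q _ => sq_nonneg _)
    linarith
  · have h := key w
    have h' := hw (w₀ - vbar)
    have h0 : ∑ q, (w q - (w₀ - vbar) q) ^ 2 ≤ 0 := by
      by_contra hc
      have := mul_pos hpos (not_le.1 hc)
      linarith
    have h1 := le_antisymm h0 (Finset.sum_nonneg fun q _ => sq_nonneg _)
    rw [Finset.sum_eq_zero_iff_of_nonneg (fun q _ => sq_nonneg _)] at h1
    funext q
    exact sub_eq_zero.1 (pow_eq_zero_iff two_ne_zero |>.1 (h1 q (Finset.mem_univ q)))
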